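/- Let 0 ≤ ε₂ < ε₂′ < ε₁′ < ε₁ ≤ 1 be real numbers. Suppose there exists a polynomial p with natural-number coefficients such that for every n and every graphic non-increasing sequence D = (d₁,…,dₙ) of natural numbers with even sum satisfying ⌈ε₂·n⌉ ≤ dₙ and d₁ ≤ min(⌊ε₁·n⌋, n−1), one has ∑_{1≤i<j≤n} N(D + 1^{−i}_{−j}) ≤ p(n)·N(D). Then there exists a natural number N₀ such that for every n ≥ N₀, every non-increasing sequence (d₁,…,dₙ) of natural numbers with even sum satisfying ⌈ε₂′·n⌉ ≤ dₙ ≤ d₁ ≤ ⌊ε₁′·n⌋ is graphic. -/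

import Mathlib

/-!
The proof is by contraposition: a long non-graphic sequence in the inner region yields a graphic
sequence in the outer region whose number of realizations is exponentially smaller than that of a
vector obtained from it by lowering two coordinates.

*From non-graphic to numbers.* By Erdős–Gallai (`erdos_gallai`, proved here in the style of
Tripathi, Venugopalan and West), a non-graphic `d` has some `k` with
`∑_{i ≤ k} dᵢ > k(k-1) + ∑_{i > k} min(k, dᵢ)`. With `ε₂' n ≤ dᵢ ≤ ε₁' n` this forces `k > ε₂' n`
and `k ε₁' n > k(k-1) + (n-k) ε₂' n`. Replacing `ε₁'`, `ε₂'` by `ε₁`, `ε₂` gains slack linear in `n`.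

*The rigid graph.* With that slack, a graph `baseGraph` on `n` vertices fits into the outer region:
a clique `A` of size `k`, an independent set `B`, an almost biregular bipartite graph between them
(degrees `⌈ε₂ n⌉` on `B`), and a threshold graph `F` of linear size (a half graph between a clique
`aᵢ` and an independent set `b_{j,s}`, `s ∈ {false, true}`, with `aᵢ ~ b_{j,s}` iff `j ≤ i`) joined
completely to `A` and not at all to `B`. A weight on the vertices such that `w u + w v` is positive
only on edges and negative only on non-edges shows that every realization of the same degrees agrees
with `baseGraph` on all pairs with `w u + w v ≠ 0` (`adj_iff_of_weight`), since
`∑ w(v) deg(v) = ∑_{edges} (w u + w v)` is maximal. In particular the half graph is the same in all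
realizations.

*Exponential blow-up.* Deleting the edges `aᵢ b_{i, c i}` and inserting `aᵢ b_{i+1, c (i+1)}`
(`reroute`) lowers only the degrees of the last `aᵢ` and of `b_{0, c 0}`, each by one, for every
`c`. Fixing `c 0`, each realization yields `2 ^ m` graphs with the lowered degrees, and nothing is
counted twice (`numV_ratio`). As `m` is linear in `n`, this beats every polynomial.
-/

/-- The degree of the vertex `i` in a simple graph on `Fin n`. -/
noncomputable def degSeq {n : ℕ} (G : SimpleGraph (Fin n)) : Fin n → ℕ :=
  fun i => Nat.card {j : Fin n // G.Adj i j}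

/-- A sequence is graphic if some simple graph on the labeled vertex set realizes it. -/
def IsGraphic {n : ℕ} (d : Fin n → ℕ) : Prop :=
  ∃ G : SimpleGraph (Fin n), ∀ i, degSeq G i = d i

/-- `numR n e` is the number `N(e)` of simple graphs on the labeled vertex set
`v₁,…,vₙ` with degree vector `e` (an integer vector). -/
noncomputable def numR (n : ℕ) (e : Fin n → ℤ) : ℕ :=
  Nat.card {G : SimpleGraph (Fin n) // ∀ i, (degSeq G i : ℤ) = e i}

/-! ### Degrees and edge modifications -/

open Classical in
/-- The degree of `x` in `G`, as an integer. -/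
noncomputable def dg {V : Type*} [Fintype V] (G : SimpleGraph V) (x : V) : ℤ :=
  ∑ y, if G.Adj x y then 1 else 0

open Classical in
theorem dg_eq_degree {V : Type*} [Fintype V] (G : SimpleGraph V) (x : V) :
    dg G x = G.degree x := by
  simp [dg, ← SimpleGraph.card_neighborFinset_eq_degree, SimpleGraph.neighborFinset_eq_filter]

theorem even_sum_dg {V : Type*} [Fintype V] (G : SimpleGraph V) : Even (∑ x, dg G x) := by
  classical
  have := G.sum_degrees_eq_twice_card_edges
  simp only [dg_eq_degree]
  rw [← Nat.cast_sum, this]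
  simp

theorem dg_add {V : Type*} [Fintype V] [DecidableEq V] (G : SimpleGraph V) {u v : V} (huv : u ≠ v)
    (h : ¬ G.Adj u v) (x : V) :
    dg (G ⊔ SimpleGraph.edge u v) x
      = dg G x + (if x = u then 1 else 0) + (if x = v then 1 else 0) := by
  classical
  have h1 : ∀ y, (if (G ⊔ SimpleGraph.edge u v).Adj x y then (1:ℤ) else 0)
      = (if G.Adj x y then 1 else 0) + (if x = u then (if y = v then 1 else 0) else 0)
        + (if x = v then (if y = u then 1 else 0) else 0) := by
    intro y
    have h' : ¬ G.Adj v u := fun k => h k.symm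
    by_cases hxu : x = u <;> by_cases hyv : y = v <;> by_cases hxv : x = v <;>
      by_cases hyu : y = u <;> by_cases hxy : x = y <;>
      simp_all [SimpleGraph.sup_adj, SimpleGraph.edge_adj]
  have h2 : dg (G ⊔ SimpleGraph.edge u v) x = ∑ y, ((if G.Adj x y then 1 else 0)
      + (if x = u then (if y = v then 1 else 0) else 0)
        + (if x = v then (if y = u then 1 else 0) else 0)) := by
    refine Finset.sum_congr rfl fun y _ => ?_
    rw [← h1 y]
    congr
  rw [h2, Finset.sum_add_distrib, Finset.sum_add_distrib]
  congr 1
  · congr 1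
    split_ifs <;> simp
  · split_ifs <;> simp

theorem dg_del {V : Type*} [Fintype V] [DecidableEq V] (G : SimpleGraph V) {u v : V}
    (h : G.Adj u v) (x : V) :
    dg (G \ SimpleGraph.edge u v) x
      = dg G x - (if x = u then 1 else 0) - (if x = v then 1 else 0) := by
  have h1 : ¬ (G \ SimpleGraph.edge u v).Adj u v := by
    simp [SimpleGraph.edge_adj, h.ne]
  have h2 := dg_add (G \ SimpleGraph.edge u v) h.ne h1 x
  have h3 : (G \ SimpleGraph.edge u v) ⊔ SimpleGraph.edge u v = G := by
    apply sdiff_sup_cancel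
    rw [SimpleGraph.edge_le_iff]
    exact Or.inr h
  rw [h3] at h2
  linarith

/-! ### The Erdős–Gallai theorem -/

/-- `H` is a subrealization of `d` saturated before `r`: its degrees are at most `d`, they agree
with `d` at the indices below `r`, and the vertices of index above `r` are independent. -/
structure SubReal {n : ℕ} (d : Fin n → ℕ) (r : Fin n) (H : SimpleGraph (Fin n)) : Prop where
  le : ∀ i, dg H i ≤ d i
  eq : ∀ i, i < r → dg H i = d i
  ind : ∀ i j, r < i → r < j → ¬ H.Adj i j

/-- A vertex `i` of larger degree than `r` has a neighbor that `r` lacks; moving the corresponding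
edge from `i` to `r` is the basic exchange in the proof of Erdős–Gallai. -/
theorem exists_exchange {V : Type*} [Fintype V] (G : SimpleGraph V) {i r : V}
    (h : dg G r < dg G i) : ∃ u, G.Adj i u ∧ ¬ G.Adj r u ∧ u ≠ r := by
  classical
  by_contra! hc
  apply absurd h
  rw [not_lt]
  unfold dg
  rw [← Equiv.sum_comp (Equiv.swap i r) (fun y => if G.Adj r y then (1:ℤ) else 0)]
  apply Finset.sum_le_sum
  intro y _
  by_cases hyi : y = i
  · subst hyi; simp
  by_cases hyr : y = r
  · subst hyr; simp [G.adj_comm]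
  rw [Equiv.swap_apply_of_ne_of_ne hyi hyr]
  have := hc y
  split_ifs <;> simp_all

open Finset in
/-- Among the subrealizations saturated before `r`, one of maximal degree at `r` is saturated at `r`
as well. Otherwise exchanges show that the vertices up to `r` form a clique and that every later
vertex `k` has degree `min (r + 1) (d k)`; counting then contradicts the Erdős–Gallai inequality
at `r`. -/
theorem eg_step {n : ℕ} (d : Fin n → ℕ) (hd : Antitone d) (he : Even (∑ i, d i)) (r : Fin n)
    (hEG : ∑ i ∈ Iic r, (d i : ℤ) ≤ ((r : ℤ) + 1) * r + ∑ i ∈ Ioi r, min ((r : ℤ) + 1) (d i))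
    (H : SimpleGraph (Fin n)) (hS : SubReal d r H)
    (hmax : ∀ H', SubReal d r H' → dg H' r ≤ dg H r) : dg H r = d r := by
  classical
  by_contra hne
  have hlt : dg H r < d r := lt_of_le_of_ne (hS.le r) hne
  have exU : ∀ i, i < r → ∃ u, H.Adj i u ∧ ¬ H.Adj r u ∧ u ≠ r := by
    intro i hi
    apply exists_exchange
    rw [hS.eq i hi]
    have := hd hi.le
    omega
  -- an unsaturated later vertex is adjacent to `r`: otherwise add that edge
  have c0 : ∀ i, r < i → dg H i < d i → H.Adj r i := by
    intro i hi hlt'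
    by_contra hadj
    have key := dg_add H hi.ne hadj
    have := hmax (H ⊔ SimpleGraph.edge r i) ⟨?_, ?_, ?_⟩
    · rw [key] at this
      simp [hi.ne] at this
    · intro x
      have := hS.le x
      rw [key]
      split_ifs <;> subst_vars <;> omega
    · intro x hx
      rw [key, hS.eq x hx, if_neg (by omega), if_neg (by omega)]; ring
    · intro x y hx hy
      have := hS.ind x y hx hy
      simp [SimpleGraph.edge_adj, this]
      omega
  have c1 : ∀ i, i < r → H.Adj r i := by
    intro i hi
    by_contra hadj
    obtain ⟨u, hu1, hu2, hu3⟩ := exU i hi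
    have hui := hu1.ne'
    -- replacing `u i` by `u r` and `i r` raises the degree of `r` by two; if only one unit is
    -- missing, parity supplies an unsaturated `k > r`, and the edge `r k` is dropped as well
    by_cases h2 : dg H r + 2 ≤ d r
    · have k1 := dg_del H hu1.symm
      have k2 := dg_add (H \ SimpleGraph.edge u i) (u := u) (v := r) hu3
        (by simp [SimpleGraph.edge_adj]; intro h; exact absurd h.symm hu2)
      have k3 := dg_add ((H \ SimpleGraph.edge u i) ⊔ SimpleGraph.edge u r) (u := i) (v := r) hi.ne
        (by simp [SimpleGraph.edge_adj, H.adj_comm i r, hadj]; grind)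
      have := hmax (((H \ SimpleGraph.edge u i) ⊔ SimpleGraph.edge u r) ⊔ SimpleGraph.edge i r)
        ⟨?_, ?_, ?_⟩
      · rw [k3, k2, k1] at this
        simp [hi.ne', hu3.symm] at this
      · intro x
        have := hS.le x
        rw [k3, k2, k1]
        split_ifs <;> subst_vars <;> omega
      · intro x hx
        have := hS.eq x hx
        rw [k3, k2, k1]
        split_ifs <;> subst_vars <;> omega
      · intro x y hx hy
        have := hS.ind x y hx hy
        simp [SimpleGraph.edge_adj, this]
        omega
    · obtain ⟨k, hk, hk2⟩ : ∃ k, r < k ∧ dg H k < d k := by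
        by_contra! hc
        have hall : ∀ k, k ≠ r → dg H k = d k := by
          intro k hk
          rcases lt_or_gt_of_ne hk with h | h
          · exact hS.eq k h
          · exact le_antisymm (hS.le k) (hc k h)
        have e1 := even_sum_dg H
        have e2 : ∑ k, dg H k + 1 = ∑ k, (d k : ℤ) := by
          rw [← Finset.add_sum_erase _ _ (Finset.mem_univ r),
            ← Finset.add_sum_erase _ (fun k => (d k : ℤ)) (Finset.mem_univ r),
            Finset.sum_congr rfl (fun k hk => hall k (Finset.ne_of_mem_erase hk))]
          omega
        have e3 : Even (∑ k, (d k : ℤ)) := by exact_mod_cast he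
        rw [← e2] at e3
        grind
      have hrk := c0 k hk hk2
      have huk : u ≠ k := by rintro rfl; exact hu2 hrk
      have k1 := dg_del H hu1.symm
      have k1' := dg_del (H \ SimpleGraph.edge u i) (u := r) (v := k)
        (by simp [SimpleGraph.edge_adj, hrk]; grind)
      have k2 := dg_add ((H \ SimpleGraph.edge u i) \ SimpleGraph.edge r k) (u := u) (v := r) hu3
        (by simp [SimpleGraph.edge_adj]; intro h; exact absurd h.symm hu2)
      have k3 := dg_add (((H \ SimpleGraph.edge u i) \ SimpleGraph.edge r k) ⊔
          SimpleGraph.edge u r) (u := i) (v := r) hi.ne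
        (by simp [SimpleGraph.edge_adj, H.adj_comm i r, hadj]; grind)
      have := hmax ((((H \ SimpleGraph.edge u i) \ SimpleGraph.edge r k) ⊔
          SimpleGraph.edge u r) ⊔ SimpleGraph.edge i r)
        ⟨?_, ?_, ?_⟩
      · rw [k3, k2, k1', k1] at this
        simp [hi.ne', hu3.symm, hk.ne] at this
      · intro x
        have := hS.le x
        rw [k3, k2, k1', k1]
        split_ifs <;> subst_vars <;> omega
      · intro x hx
        have := hS.eq x hx
        rw [k3, k2, k1', k1]
        split_ifs <;> subst_vars <;> omega
      · intro x y hx hy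
        have := hS.ind x y hx hy
        simp [SimpleGraph.edge_adj, this]
        omega
  have dgk : ∀ k, r < k → dg H k = ∑ i ∈ Iic r, if H.Adj k i then 1 else 0 := by
    intro k hk
    unfold dg
    symm
    apply Finset.sum_subset (Finset.subset_univ _)
    intro x _ hx
    have := hS.ind k x hk (by simpa using hx)
    simp [this]
  have c2 : ∀ k, r < k → dg H k = min ((r : ℤ) + 1) (d k) := by
    intro k hk
    have hle : dg H k ≤ (r : ℤ) + 1 := by
      rw [dgk k hk]
      calc _ ≤ ∑ i ∈ Iic r, (1 : ℤ) := Finset.sum_le_sum (fun i _ => by split_ifs <;> simp)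
        _ = _ := by simp
    by_contra hne'
    have hlt1 : dg H k < (r : ℤ) + 1 := by have := hS.le k; omega
    have hlt2 : dg H k < d k := by have := hS.le k; omega
    have hrk := c0 k hk hlt2
    obtain ⟨i, hi, hik⟩ : ∃ i, i ≤ r ∧ ¬ H.Adj k i := by
      by_contra! hc
      rw [dgk k hk, Finset.sum_congr rfl (g := fun _ => (1:ℤ))
        (fun i hi => by simp [hc i (by simpa using hi)])] at hlt1
      simp at hlt1
    have hi : i < r := lt_of_le_of_ne hi (by rintro rfl; exact hik hrk.symm)
    obtain ⟨u, hu1, hu2, hu3⟩ := exU i hi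
    have hui := hu1.ne'
    -- replace the edge `u i` by `u r` and `i k`
    have huk : u ≠ k := by rintro rfl; exact hu2 hrk
    have hik' : i ≠ k := (hi.trans hk).ne
    have k1 := dg_del H hu1.symm
    have k2 := dg_add (H \ SimpleGraph.edge u i) (u := u) (v := r) hu3
      (by simp [SimpleGraph.edge_adj]; intro h; exact absurd h.symm hu2)
    have k3 := dg_add ((H \ SimpleGraph.edge u i) ⊔ SimpleGraph.edge u r) (u := i) (v := k) hik'
      (by simp [SimpleGraph.edge_adj, H.adj_comm i k, hik]; grind)
    have := hmax (((H \ SimpleGraph.edge u i) ⊔ SimpleGraph.edge u r) ⊔ SimpleGraph.edge i k)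
        ⟨?_, ?_, ?_⟩
    · rw [k3, k2, k1] at this
      simp [hi.ne', hu3.symm, hk.ne] at this
    · intro x
      have := hS.le x
      rw [k3, k2, k1]
      split_ifs <;> subst_vars <;> omega
    · intro x hx
      have := hS.eq x hx
      rw [k3, k2, k1]
      split_ifs <;> subst_vars <;> omega
    · intro x y hx hy
      have := hS.ind x y hx hy
      simp [SimpleGraph.edge_adj, this]
      omega
  have c3 : ∀ i j, i < r → j < r → i ≠ j → H.Adj i j := by
    intro i j hi hj hij
    by_contra hadj
    obtain ⟨u, hu1, hu2, hu3⟩ := exU i hi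
    obtain ⟨v, hv1, hv2, hv3⟩ := exU j hj
    have hui := hu1.ne'
    have hvj := hv1.ne'
    -- replace the edges `u i` and `v j` by `u r` and `i j`; only the degree of `v > r` drops
    -- (`u = v` is allowed)
    have hur : r < u := by
      by_contra h; exact hu2 (c1 u (lt_of_le_of_ne (by omega) hu3))
    have hvr : r < v := by
      by_contra h; exact hv2 (c1 v (lt_of_le_of_ne (by omega) hv3))
    have k1 := dg_del H hu1.symm
    have k1' := dg_del (H \ SimpleGraph.edge u i) (u := v) (v := j)
      (by simp [SimpleGraph.edge_adj, hv1.symm]; omega)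
    have k2 := dg_add ((H \ SimpleGraph.edge u i) \ SimpleGraph.edge v j) (u := u) (v := r) hu3
      (by simp [SimpleGraph.edge_adj]; intro h; exact absurd h.symm hu2)
    have k3 := dg_add (((H \ SimpleGraph.edge u i) \ SimpleGraph.edge v j) ⊔
        SimpleGraph.edge u r) (u := i) (v := j) hij
      (by simp [SimpleGraph.edge_adj, hadj]; omega)
    have := hmax ((((H \ SimpleGraph.edge u i) \ SimpleGraph.edge v j) ⊔
        SimpleGraph.edge u r) ⊔ SimpleGraph.edge i j) ⟨?_, ?_, ?_⟩
    · rw [k3, k2, k1', k1] at this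
      simp [hi.ne', hu3.symm, hj.ne', hv3.symm] at this
    · intro x
      have := hS.le x
      rw [k3, k2, k1', k1]
      split_ifs <;> subst_vars <;> omega
    · intro x hx
      have := hS.eq x hx
      rw [k3, k2, k1', k1]
      split_ifs <;> subst_vars <;> omega
    · intro x y hx hy
      have := hS.ind x y hx hy
      simp [SimpleGraph.edge_adj, this]
      omega
  have hclq : ∀ i j, i ≤ r → j ≤ r → i ≠ j → H.Adj i j := by
    intro i j hi hj hij
    rcases hi.lt_or_eq with hi | rfl <;> rcases hj.lt_or_eq with hj | rfl
    · exact c3 i j hi hj hij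
    · exact (c1 i hi).symm
    · exact c1 j hj
    · exact absurd rfl hij
  have hsum : ∑ i ∈ Iic r, dg H i
      = ((r : ℤ) + 1) * r + ∑ i ∈ Ioi r, min ((r : ℤ) + 1) (d i) := by
    have e1 : ∀ i ∈ Iic r, dg H i = r + ∑ k ∈ Ioi r, if H.Adj k i then 1 else 0 := by
      intro i hi
      have hi' : i ≤ r := by simpa using hi
      have : (univ : Finset (Fin n)) = Iic r ∪ Ioi r := by
        ext x; simp; exact le_or_gt x r
      unfold dg
      rw [this, Finset.sum_union]
      · congr 1
        · rw [← Finset.add_sum_erase _ _ hi, Finset.sum_congr rfl (g := fun _ => (1:ℤ))]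
          · simp [hi]
          · intro x hx
            rw [Finset.mem_erase] at hx
            simp [hclq i x hi' (by simpa using hx.2) hx.1.symm]
        · simp [H.adj_comm i]
      · rw [Finset.disjoint_left]; intro x hx; simpa using hx
    rw [Finset.sum_congr rfl e1, Finset.sum_add_distrib, Finset.sum_comm]
    congr 1
    · simp
    · apply Finset.sum_congr rfl
      intro k hk
      have hk' : r < k := by simpa using hk
      rw [← c2 k hk', dgk k hk']
  have hlt2 : ∑ i ∈ Iic r, dg H i < ∑ i ∈ Iic r, (d i : ℤ) :=
    Finset.sum_lt_sum (fun i _ => hS.le i) ⟨r, by simp, hlt⟩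
  omega

open Finset in
/-- Sufficiency in the Erdős–Gallai theorem; `r` is zero-based, so the inequality at `r` is about
the first `r + 1` terms. -/
theorem erdos_gallai {n : ℕ} (d : Fin n → ℕ) (hd : Antitone d) (he : Even (∑ i, d i))
    (hEG : ∀ r : Fin n, ∑ i ∈ Iic r, (d i : ℤ) ≤
      ((r : ℤ) + 1) * r + ∑ i ∈ Ioi r, min ((r : ℤ) + 1) (d i)) :
    ∃ G : SimpleGraph (Fin n), ∀ i, dg G i = d i := by
  classical
  have main : ∀ r : ℕ, r ≤ n → ∃ H : SimpleGraph (Fin n), (∀ i, dg H i ≤ d i) ∧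
      (∀ i : Fin n, i.val < r → dg H i = d i) ∧
      (∀ i j : Fin n, r ≤ i.val → r ≤ j.val → ¬ H.Adj i j) := by
    intro r
    induction r with
    | zero => exact fun _ => ⟨⊥, by simp [dg], by simp, by simp⟩
    | succ r ih =>
      intro hr
      obtain ⟨H0, h1, h2, h3⟩ := ih (by omega)
      let R : Fin n := ⟨r, hr⟩
      have hne : (univ.filter (fun H => SubReal d R H)).Nonempty :=
        ⟨H0, by
          simp only [mem_filter, mem_univ, true_and]
          exact ⟨h1, fun i hi => h2 i hi, fun i j hi hj => h3 i j (le_of_lt hi) (le_of_lt hj)⟩⟩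
      obtain ⟨H, hH, hmax⟩ := Finset.exists_max_image _ (fun H => dg H R) hne
      simp only [mem_filter, mem_univ, true_and] at hH hmax
      have := eg_step d hd he R (hEG R) H hH hmax
      refine ⟨H, hH.le, ?_, fun i j hi hj => hH.ind i j hi hj⟩
      intro i hi
      rcases Nat.lt_succ_iff_lt_or_eq.mp hi with h | h
      · exact hH.eq i h
      · have : i = R := Fin.ext h
        rw [this]; assumption
  obtain ⟨H, -, h, -⟩ := main n le_rfl
  exact ⟨H, fun i => h i i.2⟩

/-! ### Counting realizations on an arbitrary vertex type -/

theorem degSeq_eq_dg {n : ℕ} (G : SimpleGraph (Fin n)) (i : Fin n) :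
    (degSeq G i : ℤ) = dg G i := by
  classical
  simp [degSeq, dg, Fintype.card_subtype]

theorem dg_comap {V W : Type*} [Fintype V] [Fintype W] (e : V ≃ W) (G : SimpleGraph W) (x : V) :
    dg (G.comap e) x = dg G (e x) := by
  classical
  unfold dg
  rw [← Equiv.sum_comp e]
  rfl

/-- The number of graphs on `V` with degree vector `D`: the analogue of `numR` for an arbitrary
finite vertex type. -/
noncomputable def numV {V : Type*} [Fintype V] (D : V → ℤ) : ℕ :=
  Nat.card {G : SimpleGraph V // ∀ x, dg G x = D x}

theorem numR_comp {V : Type*} [Fintype V] {n : ℕ} (e : Fin n ≃ V) (D : V → ℤ) :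
    numR n (fun i => D (e i)) = numV D := by
  unfold numR numV
  refine Nat.card_congr (Equiv.subtypeEquiv e.simpleGraph ?_)
  intro G
  simp only [degSeq_eq_dg]
  have : ∀ x, dg (e.simpleGraph G) x = dg G (e.symm x) := fun x => dg_comap e.symm G x
  simp only [this]
  constructor
  · intro h x; simpa using h (e.symm x)
  · intro h i; simpa using h (e i)

theorem exists_antitone_enum {V : Type*} [Fintype V] (f : V → ℕ) {n : ℕ}
    (hn : Fintype.card V = n) : ∃ e : Fin n ≃ V, Antitone (fun i => f (e i)) := by
  let e0 : Fin n ≃ V := (Fintype.equivFinOfCardEq hn).symm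
  let g : Fin n → ℕᵒᵈ := fun i => OrderDual.toDual (f (e0 i))
  refine ⟨(Tuple.sort g).trans e0, fun i j hij => ?_⟩
  exact Tuple.monotone_sort g hij

/-- P-stability gives, for any graph `G` on a vertex type of size `n` with degrees in the region and
any two vertices, the bound for the single term of the sum belonging to these vertices: the degree
sequence is sorted by relabeling. -/
theorem pstable_transfer (ε₁ ε₂ : ℝ) (p : Polynomial ℕ)
    (hp : ∀ (n : ℕ) (d : Fin n → ℕ), Antitone d → Even (∑ i, d i) →
      IsGraphic d →
      (∀ i : Fin n, ⌈ε₂ * (n : ℝ)⌉₊ ≤ d i ∧ d i ≤ min ⌊ε₁ * (n : ℝ)⌋₊ (n - 1)) →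
      (∑ i : Fin n, ∑ j : Fin n, if i < j then
          numR n (fun k => (d k : ℤ) - (if k = i then 1 else 0) -
            (if k = j then 1 else 0)) else 0)
        ≤ p.eval n * numR n (fun k => (d k : ℤ)))
    {V : Type*} [Fintype V] [DecidableEq V] (n : ℕ) (hn : Fintype.card V = n) (G : SimpleGraph V)
    (hlo : ∀ x, (⌈ε₂ * (n : ℝ)⌉₊ : ℤ) ≤ dg G x) (hhi : ∀ x, (dg G x : ℝ) ≤ ε₁ * n)
    (u v : V) (huv : u ≠ v) :
    numV (fun x => dg G x - (if x = u then 1 else 0) - (if x = v then 1 else 0))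
      ≤ p.eval n * numV (fun x => dg G x) := by
  classical
  obtain ⟨e, he⟩ := exists_antitone_enum (fun x => G.degree x) hn
  have hd : ∀ i, ((G.degree (e i) : ℕ) : ℤ) = dg G (e i) := fun i => (dg_eq_degree G _).symm
  have key := hp n (fun i => G.degree (e i)) he ?_ ?_ ?_
  · simp only [hd] at key
    rw [numR_comp e (fun x => dg G x)] at key
    refine le_trans ?_ key
    have gen : ∀ u v : V, e.symm u < e.symm v →
        numV (fun x => dg G x - (if x = u then 1 else 0) - (if x = v then 1 else 0)) ≤
        ∑ i : Fin n, ∑ j : Fin n, if i < j then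
          numR n (fun k => dg G (e k) - (if k = i then 1 else 0) -
            (if k = j then 1 else 0)) else 0 := by
      intro u v h
      rw [← numR_comp e]
      refine le_trans ?_ (Finset.single_le_sum (fun _ _ => Nat.zero_le _)
        (Finset.mem_univ (e.symm u)))
      refine le_trans ?_ (Finset.single_le_sum (fun _ _ => Nat.zero_le _)
        (Finset.mem_univ (e.symm v)))
      rw [if_pos h]
      simp only [Equiv.eq_symm_apply]
      apply le_of_eq
      rfl
    rcases lt_or_gt_of_ne (fun h => huv (e.symm.injective h) : e.symm u ≠ e.symm v) with h | h
    · exact gen u v h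
    · have := gen v u h
      refine le_trans (le_of_eq ?_) this
      congr 1; ext x; ring
  · rw [Equiv.sum_comp e (fun x => G.degree x), G.sum_degrees_eq_twice_card_edges]
    simp
  · refine ⟨G.comap e, fun i => ?_⟩
    have := degSeq_eq_dg (G.comap e) i
    rw [dg_comap, ← hd] at this
    exact_mod_cast this
  · intro i
    have h1 := hlo (e i)
    have h2 := hhi (e i)
    have h3 := G.degree_lt_card_verts (e i)
    rw [dg_eq_degree] at h1 h2
    refine ⟨by exact_mod_cast h1, le_min (Nat.le_floor (by exact_mod_cast h2)) (by omega)⟩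

/-- If `w u + w v > 0` forces an edge of `G` and `w u + w v < 0` a non-edge, then `G` maximizes
`∑_{edges} (w u + w v) = ∑ w v * deg v`, so a graph `H` with the same degrees agrees with `G` wherever
`w u + w v ≠ 0`. -/
theorem adj_iff_of_weight {V : Type*} [Fintype V] (w : V → ℤ) (G H : SimpleGraph V)
    (hGH : ∀ x, dg H x = dg G x)
    (hpos : ∀ u v, u ≠ v → 0 < w u + w v → G.Adj u v)
    (hneg : ∀ u v, u ≠ v → w u + w v < 0 → ¬ G.Adj u v) :
    ∀ u v, w u + w v ≠ 0 → (H.Adj u v ↔ G.Adj u v) := by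
  classical
  let a : SimpleGraph V → V → V → ℤ := fun G u v => if G.Adj u v then 1 else 0
  have hdg : ∀ G x, dg G x = ∑ y, a G x y := fun G x => by
    unfold dg; exact Finset.sum_congr rfl fun y _ => by congr
  have hsym : ∀ G u v, a G u v = a G v u := fun G u v => by simp [a, G.adj_comm]
  have hnn : ∀ u v, 0 ≤ (w u + w v) * (a G u v - a H u v) := by
    intro u v
    by_cases huv : u = v
    · subst huv; simp [a]
    rcases lt_trichotomy (w u + w v) 0 with h | h | h
    · have := hneg u v huv h
      rw [show a G u v = 0 from if_neg this]
      simp only [a]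
      split_ifs <;> linarith
    · simp [h]
    · have := hpos u v huv h
      rw [show a G u v = 1 from if_pos this]
      simp only [a]
      split_ifs <;> linarith
  have h1 : ∑ u, ∑ v, w u * (a G u v - a H u v) = 0 := by
    apply Finset.sum_eq_zero
    intro u _
    rw [← Finset.mul_sum, Finset.sum_sub_distrib, ← hdg, ← hdg, hGH]; simp
  have h2 : ∑ u, ∑ v, w v * (a G u v - a H u v) = 0 := by
    rw [Finset.sum_comm]
    simpa only [hsym] using h1
  have h3 : ∑ u, ∑ v, (w u + w v) * (a G u v - a H u v) = 0 := by
    simp only [add_mul, Finset.sum_add_distrib, h1, h2, add_zero]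
  intro u v huv
  have h4 := (Finset.sum_eq_zero_iff_of_nonneg
    (fun u _ => Finset.sum_nonneg fun v _ => hnn u v)).1 h3 u (Finset.mem_univ u)
  have h5 := (Finset.sum_eq_zero_iff_of_nonneg (fun v _ => hnn u v)).1 h4 v (Finset.mem_univ v)
  have h6 : a G u v = a H u v := by
    have := (mul_eq_zero.1 h5).resolve_left huv
    omega
  simp only [a] at h6
  split_ifs at h6 <;> simp_all

/-! ### The rigid graph and its rerouted versions -/

/-- The vertices: `A` (size `k`), `B` (size `l`), the `aᵢ` (`r` of them), and the `b_{j,s}` (`2r` of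
them). The two copies of each `b_j` are twins, which provides the binary choices in `reroute`. -/
abbrev Vtx (k l r : ℕ) : Type := (Fin k ⊕ Fin l) ⊕ (Fin r ⊕ (Fin r × Bool))

/-- Adjacency of the rigid graph. `A` and the `aᵢ` are cliques, `B` and the `b_{j,s}` are
independent, `A` is joined to all `aᵢ` and `b_{j,s}` and `B` to none of them, and `aᵢ ~ b_{j,s}` iff
`j ≤ i`. Between `A` and `B` the vertices `i` and `j` are adjacent iff `⌊(x + i) / k⌋` jumps between
`x = j b` and `x = (j + 1) b`; for `b ≤ k` both degree sums telescope, giving degree `b` on `B` and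
degrees `⌊(l b + i) / k⌋` on `A`. -/
def baseRel (k l r b : ℕ) : Vtx k l r → Vtx k l r → Prop
  | .inl (.inl i), .inl (.inl i') => i ≠ i'
  | .inl (.inl i), .inl (.inr j) => ((j + 1) * b + i : ℕ) / k ≠ (j * b + i : ℕ) / k
  | .inl (.inr j), .inl (.inl i) => ((j + 1) * b + i : ℕ) / k ≠ (j * b + i : ℕ) / k
  | .inl (.inr _), .inl (.inr _) => False
  | .inl (.inl _), .inr _ => True
  | .inr _, .inl (.inl _) => True
  | .inl (.inr _), .inr _ => False
  | .inr _, .inl (.inr _) => False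
  | .inr (.inl i), .inr (.inl i') => i ≠ i'
  | .inr (.inl i), .inr (.inr (j, _)) => j ≤ i
  | .inr (.inr (j, _)), .inr (.inl i) => j ≤ i
  | .inr (.inr _), .inr (.inr _) => False

/-- The rigid graph with adjacency `baseRel`. -/
def baseGraph (k l r b : ℕ) : SimpleGraph (Vtx k l r) where
  Adj := baseRel k l r b
  symm := ⟨by
    rintro ((i | j) | (i | ⟨j, s⟩)) ((i' | j') | (i' | ⟨j', s'⟩)) h <;>
      simp_all [baseRel, eq_comm]⟩
  loopless := ⟨by
    rintro ((i | j) | (i | ⟨j, s⟩)) h <;> simp_all [baseRel]⟩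

/-- Vertex weights certifying rigidity. Only the pairs between `A` and `B` have total weight zero;
the parities make `w aᵢ + w b_{j,s}` odd. -/
def wt (k l r : ℕ) : Vtx k l r → ℤ
  | .inl (.inl _) => 4 * r + 10
  | .inl (.inr _) => -(4 * r + 10)
  | .inr (.inl i) => 2 * i + 2
  | .inr (.inr (j, _)) => -(2 * j + 1)

theorem wt_pos {k l r b : ℕ} (u v : Vtx k l r) (huv : u ≠ v) (h : 0 < wt k l r u + wt k l r v) :
    (baseGraph k l r b).Adj u v := by
  change baseRel k l r b u v
  rcases u with ((i | j) | (i | ⟨j, s⟩)) <;> rcases v with ((i' | j') | (i' | ⟨j', s'⟩)) <;>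
    simp only [wt, baseRel] at * <;> first | trivial | omega | grind

theorem wt_neg {k l r b : ℕ} (u v : Vtx k l r) (huv : u ≠ v) (h : wt k l r u + wt k l r v < 0) :
    ¬ (baseGraph k l r b).Adj u v := by
  change ¬ baseRel k l r b u v
  rcases u with ((i | j) | (i | ⟨j, s⟩)) <;> rcases v with ((i' | j') | (i' | ⟨j', s'⟩)) <;>
    simp only [wt, baseRel] at * <;> first | trivial | omega

/-- `G` with the adjacencies between the `aᵢ` and the `b_{j,s}` replaced by those of the half graph
without the edges `aᵢ b_{i, c i}` and with the additional edges `aᵢ b_{i+1, c (i+1)}`. -/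
def reroute {k l r : ℕ} (G : SimpleGraph (Vtx k l r)) (c : Fin r → Bool) :
    SimpleGraph (Vtx k l r) where
  Adj
    | .inr (.inl i), .inr (.inr (j, s)) =>
        (j ≤ i ∧ ¬ (j = i ∧ s = c j)) ∨ (j.val = i.val + 1 ∧ s = c j)
    | .inr (.inr (j, s)), .inr (.inl i) =>
        (j ≤ i ∧ ¬ (j = i ∧ s = c j)) ∨ (j.val = i.val + 1 ∧ s = c j)
    | x, y => G.Adj x y
  symm := ⟨by
    rintro ((i | j) | (i | ⟨j, s⟩)) ((i' | j') | (i' | ⟨j', s'⟩)) h <;>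
      first | exact h | exact SimpleGraph.Adj.symm h⟩
  loopless := ⟨by
    rintro ((i | j) | (i | ⟨j, s⟩)) h <;> exact G.loopless.irrefl _ h⟩

open Classical in
/-- Indicator of adjacency, with a fixed decidability instance. -/
noncomputable def ind {V : Type*} (G : SimpleGraph V) (x y : V) : ℤ := if G.Adj x y then 1 else 0

theorem ind_of_iff {V : Type*} {G : SimpleGraph V} {x y : V} {P : Prop} [Decidable P]
    (h : G.Adj x y ↔ P) : ind G x y = if P then 1 else 0 := by
  unfold ind
  simp only [h]

theorem reroute_ind {k l r : ℕ} (G : SimpleGraph (Vtx k l r)) (c : Fin r → Bool)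
    (i j : Fin r) (s : Bool) :
    ind (reroute G c) (.inr (.inl i)) (.inr (.inr (j, s)))
      = (if j ≤ i then 1 else 0) - (if j = i then (if s = c j then 1 else 0) else 0)
        + (if j.val = i.val + 1 then (if s = c j then 1 else 0) else 0) := by
  have h0 : (reroute G c).Adj (.inr (.inl i)) (.inr (.inr (j, s))) ↔
    (j ≤ i ∧ ¬ (j = i ∧ s = c j)) ∨ (j.val = i.val + 1 ∧ s = c j) := Iff.rfl
  rw [ind_of_iff h0]
  by_cases h1 : s = c j
  · rcases lt_trichotomy j i with h | h | h
    · have h2 : ¬ (j.val = i.val + 1) := by omega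
      simp [h1, h.le, h.ne, h2]
    · subst h; simp [h1]
    · simp [h1, h.not_ge, h.ne']
  · simp [h1]

/-- If `G` contains the half graph, then rerouting only lowers the degrees of the last `aᵢ` and of
`b_{0, c 0}`: every other `aᵢ` and `b_{i, c i}` loses one edge and gains one. -/
theorem reroute_dg {k l m : ℕ} (G : SimpleGraph (Vtx k l (m + 1))) (c : Fin (m + 1) → Bool)
    (hG : ∀ i j s, G.Adj (.inr (.inl i)) (.inr (.inr (j, s))) ↔ j ≤ i) (x : Vtx k l (m + 1)) :
    dg (reroute G c) x = dg G x - (if x = .inr (.inl (Fin.last m)) then 1 else 0)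
      - (if x = .inr (.inr (0, c 0)) then 1 else 0) := by
  classical
  have hdg : ∀ (G : SimpleGraph (Vtx k l (m + 1))) x, dg G x = ∑ y, ind G x y := fun _ _ => rfl
  have hG1 : ∀ i j s, ind G (.inr (.inl i)) (.inr (.inr (j, s))) = if j ≤ i then 1 else 0 :=
    fun i j s => ind_of_iff (hG i j s)
  have hG2 : ∀ i j s, ind G (.inr (.inr (j, s))) (.inr (.inl i)) = if j ≤ i then 1 else 0 :=
    fun i j s => ind_of_iff (by rw [G.adj_comm, hG])
  have hR2 : ∀ i j s, ind (reroute G c) (.inr (.inr (j, s))) (.inr (.inl i))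
      = ind (reroute G c) (.inr (.inl i)) (.inr (.inr (j, s))) := fun _ _ _ => rfl
  have r1 : ∀ i y, ind (reroute G c) (.inl i) y = ind G (.inl i) y := by
    rintro (i | i) y <;> rfl
  have r2 : ∀ i y, ind (reroute G c) y (.inl i) = ind G y (.inl i) := by
    rintro (i | i) ((y | y) | (y | y)) <;> rfl
  have r3 : ∀ i i', ind (reroute G c) (.inr (.inl i)) (.inr (.inl i'))
      = ind G (.inr (.inl i)) (.inr (.inl i')) := fun _ _ => rfl
  have r4 : ∀ i i', ind (reroute G c) (.inr (.inr i)) (.inr (.inr i'))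
      = ind G (.inr (.inr i)) (.inr (.inr i')) := fun _ _ => rfl
  rw [hdg, hdg]
  rcases x with (i | (i | ⟨j, s⟩))
  · simp [r1]
  · simp only [Fintype.sum_sum_type (α₁ := Fin k ⊕ Fin l), r2]
    simp only [Fintype.sum_sum_type, Fintype.sum_prod_type, r3, reroute_ind, hG1,
      Finset.sum_add_distrib, Finset.sum_sub_distrib]
    have e1 : ∑ j : Fin (m + 1), ∑ s : Bool,
        (if j = i then (if s = c j then (1:ℤ) else 0) else 0) = 1 := by
      rw [Finset.sum_eq_single i] <;> simp +contextual
    have e2 : ∑ j : Fin (m + 1), ∑ s : Bool,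
        (if j.val = i.val + 1 then (if s = c j then (1:ℤ) else 0) else 0)
        = 1 - if i = Fin.last m then 1 else 0 := by
      by_cases hi : i = Fin.last m
      · subst hi
        rw [if_pos rfl]
        apply Finset.sum_eq_zero
        intro j _
        have : ¬ (j.val = m + 1) := by omega
        simp [this]
      · have hi' : i.val + 1 < m + 1 := by
          have := i.2
          have : i.val ≠ m := fun h => hi (Fin.ext h)
          omega
        rw [Finset.sum_eq_single ⟨i.val + 1, hi'⟩]
        · simp [hi]
        · intro j _ hj
          have : ¬ (j.val = i.val + 1) := fun h => hj (Fin.ext h)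
          simp [this]
        · simp
    rw [e1, e2]
    simp only [Sum.inr.injEq, Sum.inl.injEq, reduceCtorEq, if_false]
    ring
  · simp only [Fintype.sum_sum_type (α₁ := Fin k ⊕ Fin l), r2]
    simp only [Fintype.sum_sum_type, Fintype.sum_prod_type, r4, hR2, reroute_ind, hG2,
      Finset.sum_add_distrib, Finset.sum_sub_distrib]
    have e1 : ∑ i : Fin (m + 1),
        (if j = i then (if s = c j then (1:ℤ) else 0) else 0) = if s = c j then 1 else 0 := by
      simp
    have e2 : ∑ i : Fin (m + 1),
        (if j.val = i.val + 1 then (if s = c j then (1:ℤ) else 0) else 0)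
        = (if s = c j then 1 else 0) - if j = 0 ∧ s = c 0 then 1 else 0 := by
      by_cases hj : j = 0
      · subst hj
        simp
      · have hj0 : j.val ≠ 0 := fun h => hj (Fin.ext h)
        rw [Finset.sum_eq_single ⟨j.val - 1, by omega⟩]
        · have : j.val = j.val - 1 + 1 := by omega
          simp [hj, ← this]
        · intro i _ hi
          have : ¬ (j.val = i.val + 1) := fun h => hi (Fin.ext (by simp; omega))
          simp [this]
        · simp
    rw [e1, e2]
    simp only [Sum.inr.injEq, Prod.mk.injEq, reduceCtorEq, if_false]
    by_cases hj : j = 0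
    · subst hj; simp only [true_and]; ring
    · simp only [hj, false_and, if_false]; ring

/-- A realization `G` of the degrees of the rigid graph and a choice `c` with `c 0 = false` can be
recovered from `reroute G c`, as all realizations share the same half graph. -/
theorem numV_ratio (k l m b : ℕ) :
    2 ^ m * numV (fun x => dg (baseGraph k l (m + 1) b) x) ≤
      numV (fun x => dg (baseGraph k l (m + 1) b) x
        - (if x = .inr (.inl (Fin.last m)) then 1 else 0)
        - (if x = .inr (.inr (0, false)) then 1 else 0)) := by
  classical
  have hrig : ∀ G : SimpleGraph (Vtx k l (m + 1)), (∀ x, dg G x = dg (baseGraph k l (m + 1) b) x) →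
      ∀ i j s, G.Adj (.inr (.inl i)) (.inr (.inr (j, s))) ↔ j ≤ i := by
    intro G hG i j s
    rw [adj_iff_of_weight (wt k l (m + 1)) (baseGraph k l (m + 1) b) G hG wt_pos wt_neg]
    · rfl
    · simp only [wt]; omega
  unfold numV
  have hc : 2 ^ m = Nat.card (Fin m → Bool) := by simp
  rw [hc, ← Nat.card_prod]
  refine Nat.card_le_card_of_injective
    (fun q : (Fin m → Bool) × {G // ∀ x, dg G x = dg (baseGraph k l (m + 1) b) x} =>
      ⟨reroute q.2.1 (Fin.cons false q.1), fun x => ?_⟩) ?_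
  · rw [reroute_dg _ _ (hrig _ q.2.2), q.2.2]
    simp
  · rintro ⟨c, G, hG⟩ ⟨c', G', hG'⟩ h
    simp only [Subtype.mk.injEq] at h
    have hadj : ∀ x y, (reroute G (Fin.cons false c)).Adj x y ↔
      (reroute G' (Fin.cons false c')).Adj x y := fun x y => by rw [h]
    have hcc : c = c' := by
      funext i
      have := hadj (.inr (.inl i.succ)) (.inr (.inr (i.succ, c i)))
      simp [reroute] at this
      exact this
    have hGG : G = G' := by
      ext x y
      have := hadj x y
      rcases x with ((i | j) | (i | ⟨j, s⟩)) <;> rcases y with ((i' | j') | (i' | ⟨j', s'⟩)) <;>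
        first
        | exact this
        | rw [hrig G hG, hrig G' hG']
        | rw [G.adj_comm, G'.adj_comm, hrig G hG, hrig G' hG']
    simp [hcc, hGG]

/-! ### Degrees of the rigid graph -/

theorem jump_eq {k b : ℕ} (hk : 0 < k) (hb : b ≤ k) (x : ℕ) :
    (if (x + b) / k ≠ x / k then (1 : ℤ) else 0) = ((x + b) / k : ℕ) - (x / k : ℕ) := by
  have h1 : x / k ≤ (x + b) / k := Nat.div_le_div_right (by omega)
  have h2 : (x + b) / k ≤ x / k + 1 := by
    rw [← Nat.add_div_right x hk]
    exact Nat.div_le_div_right (by omega)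
  split_ifs with h <;> omega

theorem row_sum {k b : ℕ} (hk : 0 < k) (hb : b ≤ k) (l i : ℕ) (hi : i < k) :
    ∑ j : Fin l, (if ((j + 1) * b + i : ℕ) / k ≠ (j * b + i : ℕ) / k then (1 : ℤ) else 0)
      = ((l * b + i) / k : ℕ) := by
  have h : ∀ j : ℕ, (if ((j + 1) * b + i : ℕ) / k ≠ (j * b + i : ℕ) / k then (1 : ℤ) else 0)
      = (((j + 1) * b + i) / k : ℕ) - ((j * b + i) / k : ℕ) := by
    intro j
    have := jump_eq hk hb (j * b + i)
    rwa [show j * b + i + b = (j + 1) * b + i by ring] at this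
  rw [Fin.sum_univ_eq_sum_range
    (fun j => if ((j + 1) * b + i : ℕ) / k ≠ (j * b + i : ℕ) / k then (1 : ℤ) else 0)]
  simp only [h]
  rw [Finset.sum_range_sub (fun j => (((j * b + i) / k : ℕ) : ℤ))]
  simp [Nat.div_eq_of_lt hi]

/-- Raising `b` by one shifts the window of `k` consecutive arguments by one, which raises the sum
of the floors by exactly one. -/
theorem hermite_sum {k : ℕ} (hk : 0 < k) (y b : ℕ) :
    ∑ i ∈ Finset.range k, ((((y + i + b) / k : ℕ) : ℤ) - ((y + i) / k : ℕ)) = b := by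
  induction b with
  | zero => simp
  | succ b ih =>
    have h := Finset.sum_range_sub (fun i => (((y + i + b) / k : ℕ) : ℤ)) k
    have h2 : (y + k + b) / k = (y + b) / k + 1 := by
      rw [← Nat.add_div_right _ hk]; congr 1; ring
    simp only [h2] at h
    rw [Finset.sum_sub_distrib] at ih h ⊢
    push_cast at *
    have h3 : ∀ i, (y + (i + 1) + b : ℤ) = y + i + (b + 1) := fun i => by ring
    simp only [h3, add_zero] at h
    linarith

theorem col_sum {k b : ℕ} (hk : 0 < k) (hb : b ≤ k) (j : ℕ) :
    ∑ i : Fin k, (if ((j + 1) * b + i : ℕ) / k ≠ (j * b + i : ℕ) / k then (1 : ℤ) else 0)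
      = b := by
  have h : ∀ i : ℕ, (if ((j + 1) * b + i : ℕ) / k ≠ (j * b + i : ℕ) / k then (1 : ℤ) else 0)
      = ((j * b + i + b) / k : ℕ) - ((j * b + i) / k : ℕ) := by
    intro i
    have := jump_eq hk hb (j * b + i)
    rw [← this, show j * b + i + b = (j + 1) * b + i by ring]
  rw [Fin.sum_univ_eq_sum_range
    (fun i => if ((j + 1) * b + i : ℕ) / k ≠ (j * b + i : ℕ) / k then (1 : ℤ) else 0)]
  simp only [h]
  exact hermite_sum hk _ _

theorem ind_nonneg {V : Type*} (G : SimpleGraph V) (x y : V) : 0 ≤ ind G x y := by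
  unfold ind; split_ifs <;> simp

theorem ind_le_one {V : Type*} (G : SimpleGraph V) (x y : V) : ind G x y ≤ 1 := by
  unfold ind; split_ifs <;> simp

theorem sum_ind_le {V ι : Type*} [Fintype ι] (G : SimpleGraph V) (x : V) (f : ι → V) :
    ∑ i, ind G x (f i) ≤ Fintype.card ι := by
  refine (Finset.sum_le_sum fun i _ => ind_le_one G x (f i)).trans ?_
  simp

theorem sum_ind_nonneg {V ι : Type*} [Fintype ι] (G : SimpleGraph V) (x : V) (f : ι → V) :
    0 ≤ ∑ i, ind G x (f i) := Finset.sum_nonneg fun i _ => ind_nonneg G x (f i)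

theorem base_dg_clique {k l r b : ℕ} (hb : b ≤ k) (i : Fin k) :
    dg (baseGraph k l r b) (.inl (.inl i)) = (k - 1) + ((l * b + i) / k : ℕ) + 3 * r := by
  classical
  have hk : 0 < k := i.pos
  have h1 : ∀ i', ind (baseGraph k l r b) (.inl (.inl i)) (.inl (.inl i'))
      = if i ≠ i' then 1 else 0 := fun i' => ind_of_iff Iff.rfl
  have h2 : ∀ j : Fin l, ind (baseGraph k l r b) (.inl (.inl i)) (.inl (.inr j))
      = if ((j + 1) * b + i : ℕ) / k ≠ (j * b + i : ℕ) / k then 1 else 0 :=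
    fun j => ind_of_iff Iff.rfl
  have h3 : ∀ y, ind (baseGraph k l r b) (.inl (.inl i)) (.inr y) = 1 :=
    fun y => by
      have : (baseGraph k l r b).Adj (.inl (.inl i)) (.inr y) ↔ True := Iff.rfl
      rw [ind_of_iff this, if_pos trivial]
  change ∑ y, ind _ _ y = _
  simp only [Fintype.sum_sum_type (α₁ := Fin k ⊕ Fin l), h3]
  rw [Fintype.sum_sum_type]
  simp only [h1, h2]
  rw [row_sum hk hb l i i.2]
  have h4 : ∑ i' : Fin k, (if i ≠ i' then (1 : ℤ) else 0) = k - 1 := by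
    have : ∀ i', (if i ≠ i' then (1 : ℤ) else 0) = 1 - if i = i' then 1 else 0 := by
      intro i'; split_ifs <;> simp_all
    simp only [this, Finset.sum_sub_distrib]
    simp
  rw [h4]
  simp
  ring

theorem base_dg_indep {k l r b : ℕ} (hk : 0 < k) (hb : b ≤ k) (j : Fin l) :
    dg (baseGraph k l r b) (.inl (.inr j)) = b := by
  classical
  have h1 : ∀ j', ind (baseGraph k l r b) (.inl (.inr j)) (.inl (.inr j')) = 0 := fun j' => by
    have : (baseGraph k l r b).Adj (.inl (.inr j)) (.inl (.inr j')) ↔ False := Iff.rfl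
    rw [ind_of_iff this, if_neg not_false]
  have h2 : ∀ i : Fin k, ind (baseGraph k l r b) (.inl (.inr j)) (.inl (.inl i))
      = if ((j + 1) * b + i : ℕ) / k ≠ (j * b + i : ℕ) / k then 1 else 0 :=
    fun i => ind_of_iff Iff.rfl
  have h3 : ∀ y, ind (baseGraph k l r b) (.inl (.inr j)) (.inr y) = 0 := fun y => by
    have : (baseGraph k l r b).Adj (.inl (.inr j)) (.inr y) ↔ False := Iff.rfl
    rw [ind_of_iff this, if_neg not_false]
  change ∑ y, ind _ _ y = _
  simp only [Fintype.sum_sum_type (α₁ := Fin k ⊕ Fin l), h3]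
  rw [Fintype.sum_sum_type]
  simp only [h1, h2]
  rw [col_sum hk hb j]
  simp

theorem base_dg_mid {k l r b : ℕ} (x : Fin r ⊕ (Fin r × Bool)) :
    (k : ℤ) ≤ dg (baseGraph k l r b) (.inr x) ∧
      dg (baseGraph k l r b) (.inr x) ≤ k + 3 * r := by
  classical
  have h1 : ∀ j, ind (baseGraph k l r b) (.inr x) (.inl (.inr j)) = 0 := fun j' => by
    have : (baseGraph k l r b).Adj (.inr x) (.inl (.inr j')) ↔ False := by
      rcases x with x | x <;> rfl
    rw [ind_of_iff this, if_neg not_false]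
  have h2 : ∀ i, ind (baseGraph k l r b) (.inr x) (.inl (.inl i)) = 1 := fun i => by
    have : (baseGraph k l r b).Adj (.inr x) (.inl (.inl i)) ↔ True := by
      rcases x with x | x <;> rfl
    rw [ind_of_iff this, if_pos trivial]
  have h3 : dg (baseGraph k l r b) (.inr x)
      = k + ∑ y, ind (baseGraph k l r b) (.inr x) (.inr y) := by
    change ∑ y, ind _ _ y = _
    rw [Fintype.sum_sum_type, Fintype.sum_sum_type]
    simp only [h1, h2]
    simp
  have h4 := sum_ind_le (baseGraph k l r b) (.inr x) (fun y => .inr y)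
  have h5 := sum_ind_nonneg (baseGraph k l r b) (.inr x) (fun y => .inr y)
  simp only [Fintype.card_sum, Fintype.card_prod, Fintype.card_fin, Fintype.card_bool] at h4
  push_cast at h4
  rw [h3]
  constructor <;> linarith

/-! ### Consequences of P-stability -/

/-- The rigid graph with parameters `k`, `l`, `m + 1`, `b` lies in the region, so P-stability bounds
the blow-up factor `2 ^ m`. The inequality `hle` says that the average degree on `A` is at most
about `ε₁ n`. -/
theorem two_pow_le (ε₁ ε₂ : ℝ) (p : Polynomial ℕ)
    (hp : ∀ (n : ℕ) (d : Fin n → ℕ), Antitone d → Even (∑ i, d i) →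
      IsGraphic d →
      (∀ i : Fin n, ⌈ε₂ * (n : ℝ)⌉₊ ≤ d i ∧ d i ≤ min ⌊ε₁ * (n : ℝ)⌋₊ (n - 1)) →
      (∑ i : Fin n, ∑ j : Fin n, if i < j then
          numR n (fun k => (d k : ℤ) - (if k = i then 1 else 0) -
            (if k = j then 1 else 0)) else 0)
        ≤ p.eval n * numR n (fun k => (d k : ℤ)))
    (n k l m b : ℕ) (hn : n = k + l + 3 * (m + 1)) (hk : 0 < k)
    (hb : b = ⌈ε₂ * (n : ℝ)⌉₊) (hbk : b ≤ k)
    (hle : (k : ℝ) * (k + 3 * (m + 1)) + l * b ≤ k * (ε₁ * n)) :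
    2 ^ m ≤ p.eval n := by
  classical
  have hk' : (0 : ℝ) < k := by exact_mod_cast hk
  have hmid : (k : ℝ) + 3 * (m + 1) ≤ ε₁ * n := by
    have : (0 : ℝ) ≤ l * b := by positivity
    exact le_of_mul_le_mul_left (by linarith) hk'
  have hcard : Fintype.card (Vtx k l (m + 1)) = n := by
    simp only [Fintype.card_sum, Fintype.card_prod, Fintype.card_fin, Fintype.card_bool]; omega
  have h1 := pstable_transfer ε₁ ε₂ p hp n hcard (baseGraph k l (m + 1) b) ?_ ?_
    (.inr (.inl (Fin.last m))) (.inr (.inr (0, false))) (by simp)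
  · have h2 := (numV_ratio k l m b).trans h1
    refine Nat.le_of_mul_le_mul_right h2 ?_
    unfold numV
    have : Nonempty {G : SimpleGraph (Vtx k l (m + 1)) //
        ∀ x, dg G x = dg (baseGraph k l (m + 1) b) x} := ⟨⟨_, fun _ => rfl⟩⟩
    exact Nat.card_pos
  · rw [← hb]
    rintro ((i | j) | x)
    · rw [base_dg_clique hbk]
      push_cast
      have : (0 : ℤ) ≤ ((l * b + i : ℕ) / k : ℕ) := by positivity
      push_cast at this
      omega
    · rw [base_dg_indep hk hbk]
    · have := (base_dg_mid (k := k) (l := l) (r := m + 1) (b := b) x).1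
      omega
  · rintro ((i | j) | x)
    · rw [base_dg_clique hbk]
      have h3 : (((l * b + i) / k : ℕ) : ℝ) ≤ (l * b + k) / k := by
        refine Nat.cast_div_le.trans ?_
        have : (i : ℝ) ≤ k := by exact_mod_cast i.2.le
        push_cast
        gcongr
      have h4 : ((l : ℝ) * b + k) / k + (k + 3 * (m + 1)) - 1 ≤ ε₁ * n := by
        have : ((l : ℝ) * b + k) / k = l * b / k + 1 := by field_simp
        rw [this]
        have : (l : ℝ) * b / k ≤ ε₁ * n - (k + 3 * (m + 1)) := by
          rw [div_le_iff₀ hk']; linarith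
        linarith
      rw [Int.cast_add, Int.cast_add, Int.cast_natCast]
      push_cast
      linarith
    · rw [base_dg_indep hk hbk]
      have : (b : ℝ) ≤ k := by exact_mod_cast hbk
      push_cast
      have : (0 : ℝ) ≤ m := by positivity
      linarith
    · have h3 := (base_dg_mid (k := k) (l := l) (r := m + 1) (b := b) x).2
      have h4 : (dg (baseGraph k l (m + 1) b) (.inr x) : ℝ) ≤ k + 3 * (m + 1) := by
        exact_mod_cast h3
      linarith

theorem eventually_poly_lt (p : Polynomial ℕ) {δ : ℝ} (hδ : 0 < δ) :
    ∃ N₀ : ℕ, ∀ n ≥ N₀, p.eval n < 2 ^ ⌊δ * (n : ℝ)⌋₊ := by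
  have h1 : Filter.Tendsto (fun n : ℕ => (p.map (Nat.castRingHom ℝ)).eval (n : ℝ)
      / Real.exp ((δ * Real.log 2) * n)) Filter.atTop (nhds 0) := by
    have hb : 0 < δ * Real.log 2 := mul_pos hδ (Real.log_pos (by norm_num))
    have := (Polynomial.tendsto_div_exp_atTop
      ((p.map (Nat.castRingHom ℝ)).comp (Polynomial.C (δ * Real.log 2)⁻¹ * Polynomial.X))).comp
      ((tendsto_natCast_atTop_atTop (R := ℝ)).const_mul_atTop hb)
    refine this.congr fun n => ?_
    simp only [Function.comp, Polynomial.eval_comp, Polynomial.eval_mul, Polynomial.eval_C,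
      Polynomial.eval_X]
    rw [inv_mul_cancel_left₀ hb.ne']
  have h2 := h1.eventually (gt_mem_nhds (show (0:ℝ) < 1 / 2 by norm_num))
  obtain ⟨N₀, hN⟩ := Filter.eventually_atTop.1 h2
  refine ⟨N₀, fun n hn => ?_⟩
  have h3 := hN n hn
  rw [div_lt_iff₀ (Real.exp_pos _)] at h3
  have h4 : (p.map (Nat.castRingHom ℝ)).eval (n : ℝ) = ((p.eval n : ℕ) : ℝ) := by
    rw [Polynomial.eval_map, Polynomial.eval₂_at_natCast]; simp
  rw [h4] at h3
  have h5 : Real.exp (δ * Real.log 2 * n) = (2 : ℝ) ^ (δ * n) := by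
    rw [Real.rpow_def_of_pos (by norm_num)]; congr 1; ring
  have h6 : (2 : ℝ) ^ (δ * n) ≤ 2 ^ ((⌊δ * (n : ℝ)⌋₊ : ℝ) + 1) :=
    Real.rpow_le_rpow_of_exponent_le (by norm_num) (Nat.lt_floor_add_one _).le
  rw [Real.rpow_add (by norm_num), Real.rpow_natCast, Real.rpow_one] at h6
  rw [h5] at h3
  have : ((p.eval n : ℕ) : ℝ) < 2 ^ ⌊δ * (n : ℝ)⌋₊ := by linarith
  exact_mod_cast this

/-! ### The theorem -/

/-- if the very simple region with bounds `⌈ε₂·n⌉ ≤ dₙ` and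
`d₁ ≤ min(⌊ε₁·n⌋, n−1)` is P-stable (witnessed by a polynomial `p` with
natural-number coefficients), then for `ε₂ < ε₂′ < ε₁′ < ε₁` all sufficiently
long non-increasing sequences with even sum and `⌈ε₂′·n⌉ ≤ dₙ ≤ d₁ ≤ ⌊ε₁′·n⌋`
are graphic. -/
theorem stmt19 (ε₁ ε₂ ε₁' ε₂' : ℝ)
    (h0 : 0 ≤ ε₂) (h1 : ε₂ < ε₂') (h2 : ε₂' < ε₁') (h3 : ε₁' < ε₁) (h4 : ε₁ ≤ 1)
    (p : Polynomial ℕ)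
    (hp : ∀ (n : ℕ) (d : Fin n → ℕ), Antitone d → Even (∑ i, d i) →
      IsGraphic d →
      (∀ i : Fin n, ⌈ε₂ * (n : ℝ)⌉₊ ≤ d i ∧ d i ≤ min ⌊ε₁ * (n : ℝ)⌋₊ (n - 1)) →
      (∑ i : Fin n, ∑ j : Fin n, if i < j then
          numR n (fun k => (d k : ℤ) - (if k = i then 1 else 0) -
            (if k = j then 1 else 0)) else 0)
        ≤ p.eval n * numR n (fun k => (d k : ℤ))) :
    ∃ N₀ : ℕ, ∀ n : ℕ, N₀ ≤ n → ∀ d : Fin n → ℕ, Antitone d →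
      Even (∑ i, d i) →
      (∀ i : Fin n, ⌈ε₂' * (n : ℝ)⌉₊ ≤ d i ∧ d i ≤ ⌊ε₁' * (n : ℝ)⌋₊) →
      IsGraphic d := by
  -- the degree range is widened by `ε₁ - ε₁'`; the half graph uses `3(m + 1)` vertices, so with
  -- `m ≈ (ε₁ - ε₁') n / 6` it consumes about half of this slack
  obtain ⟨N₁, hN₁⟩ := eventually_poly_lt p (δ := (ε₁ - ε₁') / 6) (by linarith)
  obtain ⟨N₂, hN₂⟩ := exists_nat_ge (8 / (ε₁ - ε₁'))
  obtain ⟨N₃, hN₃⟩ := exists_nat_ge (1 / (ε₂' - ε₂))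
  refine ⟨max N₁ (max N₂ N₃), fun n hn d hd he hb => ?_⟩
  have hpow := hN₁ n (le_trans (le_max_left _ _) hn)
  have hn2 : 8 ≤ (ε₁ - ε₁') * n := by
    have : (N₂ : ℝ) ≤ n := by
      exact_mod_cast (le_trans (le_max_left _ _) (le_max_right _ _)).trans hn
    rw [← div_le_iff₀' (by linarith)]
    linarith
  have hn3 : 1 ≤ (ε₂' - ε₂) * n := by
    have : (N₃ : ℝ) ≤ n := by
      exact_mod_cast (le_trans (le_max_right _ _) (le_max_right _ _)).trans hn
    rw [← div_le_iff₀' (by linarith)]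
    linarith
  by_contra hng
  -- the Erdős–Gallai inequality fails at some index `r`
  obtain ⟨r, hr⟩ : ∃ r : Fin n, ((r : ℤ) + 1) * r + ∑ i ∈ Finset.Ioi r, min ((r : ℤ) + 1) (d i)
      < ∑ i ∈ Finset.Iic r, (d i : ℤ) := by
    by_contra! hc
    obtain ⟨G, hG⟩ := erdos_gallai d hd he hc
    exact hng ⟨G, fun i => by have := degSeq_eq_dg G i; rw [hG] at this; exact_mod_cast this⟩
  have hn0 : (0 : ℝ) ≤ n := Nat.cast_nonneg n
  set k : ℕ := r.val + 1 with hkdef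
  have hkn : k ≤ n := r.2
  have hup : ∑ i ∈ Finset.Iic r, (d i : ℝ) ≤ k * (ε₁' * n) := by
    have : ∀ i ∈ Finset.Iic r, (d i : ℝ) ≤ ε₁' * n := fun i _ =>
      (Nat.le_floor_iff (by apply mul_nonneg <;> linarith)).1 (hb i).2
    refine (Finset.sum_le_card_nsmul _ _ _ this).trans ?_
    simp [hkdef]
  have hlow : (n - k : ℝ) * min (k : ℝ) (ε₂' * n)
      ≤ ∑ i ∈ Finset.Ioi r, min ((r : ℝ) + 1) (d i) := by
    have : ∀ i ∈ Finset.Ioi r, min (k : ℝ) (ε₂' * n) ≤ min ((r : ℝ) + 1) (d i) := by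
      intro i _
      rw [hkdef]; push_cast
      exact min_le_min le_rfl ((Nat.le_ceil _).trans (by exact_mod_cast (hb i).1))
    refine le_trans ?_ (Finset.card_nsmul_le_sum _ _ _ this)
    rw [Fin.card_Ioi, nsmul_eq_mul]
    have : ((n - 1 - r.val : ℕ) : ℝ) = n - k := by
      rw [show n - 1 - r.val = n - k by omega, Nat.cast_sub hkn]
    rw [this]
  have hr' : (k : ℝ) * (k - 1) + ∑ i ∈ Finset.Ioi r, min ((r : ℝ) + 1) (d i)
      < ∑ i ∈ Finset.Iic r, (d i : ℝ) := by
    have : (((((r : ℤ) + 1) * r + ∑ i ∈ Finset.Ioi r, min ((r : ℤ) + 1) (d i) : ℤ)) : ℝ)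
      < ((∑ i ∈ Finset.Iic r, (d i : ℤ) : ℤ) : ℝ) := by exact_mod_cast hr
    push_cast at this
    rw [hkdef]; push_cast
    linarith
  have hmain : (k : ℝ) * (k - 1) + (n - k) * min (k : ℝ) (ε₂' * n) < k * (ε₁' * n) := by
    linarith
  have hk0 : (0 : ℝ) < k := by rw [hkdef]; positivity
  have hknR : (k : ℝ) ≤ n := by exact_mod_cast hkn
  have hle_n : ε₁ * n ≤ n := by nlinarith
  -- for `k ≤ ε₂' n` the minimum is `k`, and the inequality would give `ε₁' n > n - 1`
  have hk2 : ε₂' * n < k := by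
    by_contra! hc
    rw [min_eq_left hc] at hmain
    have : (k : ℝ) * (n - 1) < k * (ε₁' * n) := by linarith
    have := lt_of_mul_lt_mul_left this hk0.le
    linarith
  rw [min_eq_right hk2.le] at hmain
  have hk3 : (k : ℝ) < ε₁' * n + 1 := by
    have : 0 ≤ (n - k : ℝ) * (ε₂' * n) := by
      apply mul_nonneg (by linarith); apply mul_nonneg <;> linarith
    have : (k : ℝ) * (k - 1) < k * (ε₁' * n) := by linarith
    have := lt_of_mul_lt_mul_left this hk0.le
    linarith
  set m : ℕ := ⌊(ε₁ - ε₁') / 6 * (n : ℝ)⌋₊ with hm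
  have hmle : (m : ℝ) ≤ (ε₁ - ε₁') / 6 * n := Nat.floor_le (by apply mul_nonneg <;> linarith)
  have hsz : k + 3 * (m + 1) ≤ n := by
    have : (k : ℝ) + 3 * (m + 1) ≤ n := by linarith
    exact_mod_cast this
  have hbR : (⌈ε₂ * (n : ℝ)⌉₊ : ℝ) < ε₂ * n + 1 := Nat.ceil_lt_add_one (by positivity)
  have hble : (⌈ε₂ * (n : ℝ)⌉₊ : ℝ) ≤ ε₂' * n := by linarith
  refine absurd (two_pow_le ε₁ ε₂ p hp n k (n - k - 3 * (m + 1)) m ⌈ε₂ * (n : ℝ)⌉₊ (by omega)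
    (by omega) rfl ?_ ?_) (not_le.2 hpow)
  · have : (⌈ε₂ * (n : ℝ)⌉₊ : ℝ) ≤ k := by linarith
    exact_mod_cast this
  · have hl : ((n - k - 3 * (m + 1) : ℕ) : ℝ) ≤ n - k := by
      rw [← Nat.cast_sub hkn]; exact_mod_cast Nat.sub_le _ _
    have h5 : ((n - k - 3 * (m + 1) : ℕ) : ℝ) * ⌈ε₂ * (n : ℝ)⌉₊ ≤ (n - k) * (ε₂' * n) :=
      mul_le_mul hl hble (by positivity) (by linarith)
    have h6 : (k : ℝ) * (ε₁' * n + 1 + 3 * (m + 1)) ≤ k * (ε₁ * n) :=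
      mul_le_mul_of_nonneg_left (by linarith) hk0.le
    linarith
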